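/- arXiv:1906.02257 — 3 statements merged into one kernel-verified Lean document; each statement's English description precedes it below -/
import Mathlib

section
/- Let α, β ≥ 0 be real numbers with α + β > 3/2, and let ε > 0. Then there exists a constant C > 0 such that for every n ∈ ℤ³, the sum ∑_{n₁ ∈ ℤ³} ⟨n₁⟩^{-2α} ⟨n − n₁⟩^{-2β} is at most C ⟨n⟩^{-min(2α, 2β, 2α+2β−3) + ε}. -/
/-- Euclidean norm of a lattice point `n ∈ ℤ³`. -/
noncomputable def znorm (n : Fin 3 → ℤ) : ℝ := Real.sqrt (∑ i, ((n i : ℝ)) ^ 2)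

/-- Japanese bracket `⟨n⟩ = (1 + |n|²)^{1/2}` of a lattice point `n ∈ ℤ³`. -/
noncomputable def jb (n : Fin 3 → ℤ) : ℝ := Real.sqrt (1 + ∑ i, ((n i : ℝ)) ^ 2)

theorem jb_sq (n : Fin 3 → ℤ) : jb n ^ 2 = 1 + ∑ i, ((n i : ℝ)) ^ 2 := by
  unfold jb
  exact Real.sq_sqrt (by positivity)

theorem one_le_jb (n : Fin 3 → ℤ) : 1 ≤ jb n := by
  unfold jb
  rw [Real.one_le_sqrt]
  have : 0 ≤ ∑ i, ((n i : ℝ)) ^ 2 := by positivity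
  linarith

theorem jb_le_two (n m : Fin 3 → ℤ) (h : jb (n - m) ≤ jb m) : jb n ≤ 2 * jb m := by
  have h0 := one_le_jb n
  have h1 := one_le_jb m
  have h2 := one_le_jb (n - m)
  have e0 := jb_sq n
  have e1 := jb_sq m
  have e2 := jb_sq (n - m)
  simp only [Fin.sum_univ_three, Pi.sub_apply, Int.cast_sub] at e0 e1 e2
  have h3 : jb (n - m) ^ 2 ≤ jb m ^ 2 := by gcongr
  refine (sq_le_sq₀ (by linarith) (by linarith)).mp ?_
  nlinarith [sq_nonneg ((n 0 : ℝ) - 2 * m 0), sq_nonneg ((n 1 : ℝ) - 2 * m 1),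
    sq_nonneg ((n 2 : ℝ) - 2 * m 2)]

theorem summable_jb (s : ℝ) (hs : 3 < s) : Summable fun n : Fin 3 → ℤ => jb n ^ (-s) := by
  let b := Pi.basisFun ℝ (Fin 3)
  let L := Submodule.span ℤ (Set.range b)
  have hr : Module.finrank ℤ L = 3 := by
    rw [ZLattice.rank ℝ L]; simp
  have hL : Summable fun z : L => ‖z‖ ^ (-s) :=
    ZLattice.summable_norm_rpow L (-s) (by rw [hr]; push_cast; linarith)
  have hmem : ∀ n : Fin 3 → ℤ, (fun i => (n i : ℝ)) ∈ L := by
    intro n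
    refine (b.mem_span_iff_repr_mem ℤ _).mpr ?_
    intro i
    exact ⟨n i, by simp [b]⟩
  let f : (Fin 3 → ℤ) → L := fun n => ⟨_, hmem n⟩
  have hf : Function.Injective f := by
    intro n m h
    have := congrArg Subtype.val h
    funext i
    have h3 : (n i : ℝ) = m i := congrFun this i
    exact_mod_cast h3
  refine Summable.of_norm_bounded_eventually (hL.comp_injective hf) ?_
  have : ∀ᶠ n : Fin 3 → ℤ in Filter.cofinite, n ≠ 0 := by
    simp
  filter_upwards [this] with n hn
  have hp := one_le_jb n
  rw [Real.norm_of_nonneg (by positivity)]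
  have hfn : ‖f n‖ = ‖(fun i => (n i : ℝ))‖ := rfl
  have hpos : 0 < ‖f n‖ := by
    rw [hfn, norm_pos_iff]
    intro h
    apply hn
    funext i
    have := congrFun h i
    simpa using this
  refine Real.rpow_le_rpow_of_nonpos hpos ?_ (by linarith)
  rw [hfn, pi_norm_le_iff_of_nonneg (by linarith)]
  intro i
  rw [Real.norm_eq_abs]
  refine abs_le_of_sq_le_sq ?_ (by linarith)
  rw [jb_sq]
  have := Finset.single_le_sum (f := fun i => (n i : ℝ) ^ 2) (fun i _ => sq_nonneg _)
    (Finset.mem_univ i)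
  linarith

theorem pt_bound (a b e x y N : ℝ) (he : 0 ≤ e) (hea : e ≤ a) (hN : 1 ≤ N) (hx : 1 ≤ x)
    (hy : 1 ≤ y) (hyx : y ≤ x) (hNx : N ≤ 2 * x) :
    x ^ (-a) * y ^ (-b) ≤ (2 ^ e * N ^ (-e)) * y ^ (-(a + b - e)) := by
  have hx0 : 0 < x := by linarith
  have hy0 : 0 < y := by linarith
  have h1 : x ^ (-a) = x ^ (-e) * x ^ (-(a - e)) := by
    rw [← Real.rpow_add hx0]; ring_nf
  have h2 : y ^ (-(a + b - e)) = y ^ (-(a - e)) * y ^ (-b) := by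
    rw [← Real.rpow_add hy0]; ring_nf
  have h3 : x ^ (-e) ≤ 2 ^ e * N ^ (-e) := by
    have := Real.rpow_le_rpow_of_nonpos (by linarith : 0 < N / 2) (by linarith : N / 2 ≤ x)
      (by linarith : -e ≤ 0)
    rw [Real.div_rpow (by linarith) (by norm_num), Real.rpow_neg (by norm_num : (0:ℝ) ≤ 2),
      div_inv_eq_mul, mul_comm] at this
    exact this
  have h4 : x ^ (-(a - e)) ≤ y ^ (-(a - e)) :=
    Real.rpow_le_rpow_of_nonpos hy0 hyx (by linarith)
  rw [h1, h2, ← mul_assoc]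
  gcongr

theorem convolution_estimate (α β ε : ℝ) (hα : 0 ≤ α) (hβ : 0 ≤ β)
    (hαβ : 3 / 2 < α + β) (hε : 0 < ε) :
    ∃ C > 0, ∀ n : Fin 3 → ℤ,
      ∑' n₁ : Fin 3 → ℤ, jb n₁ ^ (-(2 * α)) * jb (n - n₁) ^ (-(2 * β))
        ≤ C * jb n ^ (-(min (2 * α) (min (2 * β) (2 * α + 2 * β - 3))) + ε) := by
  set m := min (2 * α) (min (2 * β) (2 * α + 2 * β - 3)) with hm
  have hma : m ≤ 2 * α := min_le_left _ _
  have hmb : m ≤ 2 * β := (min_le_right _ _).trans (min_le_left _ _)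
  have hmc : m ≤ 2 * α + 2 * β - 3 := (min_le_right _ _).trans (min_le_right _ _)
  obtain ⟨e, he0, hea, heb, hes, hem⟩ : ∃ e : ℝ, 0 ≤ e ∧ e ≤ 2 * α ∧ e ≤ 2 * β ∧
      3 < 2 * α + 2 * β - e ∧ m - ε ≤ e := by
    rcases le_total 0 (m - ε) with h | h
    · exact ⟨m - ε, h, by linarith, by linarith, by linarith, le_rfl⟩
    · exact ⟨0, le_rfl, by linarith, by linarith, by linarith, h⟩
  set s := 2 * α + 2 * β - e with hs
  have hS := summable_jb s hes
  set S := ∑' n : Fin 3 → ℤ, jb n ^ (-s) with hSd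
  have hS0 : 0 ≤ S := tsum_nonneg fun n => by
    have := one_le_jb n
    positivity
  refine ⟨2 ^ e * (2 * S + 1), by positivity, fun n => ?_⟩
  have hN := one_le_jb n
  have hS' : Summable fun k : Fin 3 → ℤ => jb (n - k) ^ (-s) :=
    (Equiv.subLeft n).summable_iff.mpr hS
  have hSe : ∑' k : Fin 3 → ℤ, jb (n - k) ^ (-s) = S :=
    (Equiv.subLeft n).tsum_eq (fun k => jb k ^ (-s))
  have hpt : ∀ k : Fin 3 → ℤ, jb k ^ (-(2 * α)) * jb (n - k) ^ (-(2 * β)) ≤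
      (2 ^ e * jb n ^ (-e)) * (jb k ^ (-s) + jb (n - k) ^ (-s)) := by
    intro k
    have hx := one_le_jb k
    have hy := one_le_jb (n - k)
    have p1 : 0 ≤ jb k ^ (-s) := by positivity
    have p2 : 0 ≤ jb (n - k) ^ (-s) := by positivity
    rcases le_total (jb (n - k)) (jb k) with h | h
    · refine (pt_bound (2 * α) (2 * β) e _ _ _ he0 hea hN hx hy h (jb_le_two n k h)).trans ?_
      gcongr
      linarith
    · have h2 := jb_le_two n (n - k) (by rwa [sub_sub_cancel])
      have := pt_bound (2 * β) (2 * α) e _ _ _ he0 heb hN hy hx h h2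
      rw [mul_comm, hs]
      refine this.trans ?_
      rw [add_comm (2 * β), ← hs]
      gcongr
      linarith
  have hsum := (hS.add hS').mul_left (2 ^ e * jb n ^ (-e))
  have hsumL : Summable fun k : Fin 3 → ℤ => jb k ^ (-(2 * α)) * jb (n - k) ^ (-(2 * β)) := by
    refine Summable.of_nonneg_of_le (fun k => ?_) hpt hsum
    have hx := one_le_jb k
    have hy := one_le_jb (n - k)
    positivity
  calc _ ≤ _ := hsumL.tsum_le_tsum hpt hsum
    _ = (2 ^ e * jb n ^ (-e)) * (S + S) := by
      rw [tsum_mul_left, hS.tsum_add hS', hSe]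
    _ ≤ (2 ^ e * jb n ^ (-m + ε)) * (2 * S + 1) := by
      have h5 : jb n ^ (-e) ≤ jb n ^ (-m + ε) :=
        Real.rpow_le_rpow_of_exponent_le hN (by linarith)
      have h6 : S + S ≤ 2 * S + 1 := by linarith
      exact mul_le_mul (mul_le_mul_of_nonneg_left h5 (by positivity)) h6 (by linarith)
        (by positivity)
    _ = _ := by ring
end

section
/- Let k be a positive odd integer. For every (u₀, v₀) ∈ ℝ², there exist differentiable functions u, v : ℝ → ℝ with u(0) = u₀, v(0) = v₀, and for all t ∈ ℝ, u'(t) = v(t) and v'(t) = −u(t)^k. That is, the dispersionless nonlinear wave system has a global-in-time solution for every initial data. -/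
open Set Filter Topology

lemma aux_global {E : Type*} [NormedAddCommGroup E] [NormedSpace ℝ E] [CompleteSpace E]
    (F : E → E) (K L : NNReal) (hK : LipschitzWith K F) (hL : ∀ x, ‖F x‖ ≤ L) (x : E) :
    ∃ α : ℝ → E, α 0 = x ∧ ∀ t, HasDerivAt α (F (α t)) t := by
  have loc : ∀ T : ℝ, ∃ α : ℝ → E, α 0 = x ∧ ∀ t ∈ Ioo (-T) T, HasDerivAt α (F (α t)) t := by
    intro T
    rcases le_or_gt T 0 with hT | hT
    · exact ⟨fun _ => x, rfl, fun t ht => absurd (ht.1.trans ht.2) (by linarith)⟩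
    have h0 : (0:ℝ) ∈ Icc (-T) T := ⟨by linarith, hT.le⟩
    have hp : IsPicardLindelof (fun _ => F) (tmin := -T) (tmax := T) ⟨0, h0⟩ x
        (L * T.toNNReal) 0 L K := by
      apply IsPicardLindelof.of_time_independent
      · exact fun y _ => hL y
      · exact hK.lipschitzOnWith
      · simp [hT.le]
    obtain ⟨α, h1, h2⟩ := hp.exists_eq_forall_mem_Icc_hasDerivWithinAt₀
    exact ⟨α, h1, fun t ht => (h2 t (Ioo_subset_Icc_self ht)).hasDerivAt (Icc_mem_nhds ht.1 ht.2)⟩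
  choose γ hγ0 hγ using loc
  have uniq : ∀ a b : ℝ, 0 < a → a ≤ b → EqOn (γ a) (γ b) (Ioo (-a) a) := by
    intro a b ha hab
    refine ODE_solution_unique_of_mem_Ioo (v := fun _ => F) (K := K) (s := fun _ => univ) (t₀ := 0)
      (fun t _ => hK.lipschitzOnWith) ⟨by linarith, ha⟩
      (fun t ht => ⟨hγ a t ht, trivial⟩)
      (fun t ht => ⟨hγ b t ⟨by linarith [ht.1], by linarith [ht.2]⟩, trivial⟩) ?_
    rw [hγ0, hγ0]
  refine ⟨fun t => γ (|t| + 1) t, hγ0 _, fun t => ?_⟩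
  have ht : t ∈ Ioo (-(|t| + 1)) (|t| + 1) := by
    rw [mem_Ioo, ← abs_lt]; exact lt_add_one _
  refine (hγ (|t| + 1) t ht).congr_of_eventuallyEq ?_
  filter_upwards [Ioo_mem_nhds ht.1 ht.2] with s hs
  rcases le_total (|s| + 1) (|t| + 1) with h | h
  · exact uniq _ _ (by positivity) h (abs_lt.mp <| lt_add_one _)
  · exact (uniq _ _ (by positivity) h hs).symm

/-- Truncated power. -/
noncomputable def tpow (R : ℝ) (k : ℕ) (x : ℝ) : ℝ := (max (-R) (min R x)) ^ k

lemma tpow_eq {R : ℝ} {k : ℕ} {x : ℝ} (h : |x| ≤ R) : tpow R k x = x ^ k := by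
  have := abs_le.mp h
  rw [tpow, min_eq_right this.2, max_eq_right this.1]

lemma clamp_abs {R : ℝ} (hR : 0 ≤ R) (x : ℝ) : |max (-R) (min R x)| ≤ R := by
  rw [abs_le]
  exact ⟨le_max_left _ _, max_le (by linarith) (min_le_left _ _)⟩

lemma tpow_abs {R : ℝ} (hR : 0 ≤ R) (k : ℕ) (x : ℝ) : |tpow R k x| ≤ R ^ k := by
  rw [tpow, abs_pow]
  exact pow_le_pow_left₀ (abs_nonneg _) (clamp_abs hR x) k

lemma tpow_cont (R : ℝ) (k : ℕ) : Continuous (tpow R k) := by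
  unfold tpow; fun_prop

lemma tpow_lip {R : ℝ} (hR : 0 ≤ R) (k : ℕ) : ∃ K, LipschitzWith K (tpow R k) := by
  have h1 : LipschitzWith 1 (fun x : ℝ => max (-R) (min R x)) :=
    (LipschitzWith.id.const_min R).const_max (-R)
  refine ⟨(k * R ^ (k-1)).toNNReal, LipschitzWith.of_dist_le_mul fun x y => ?_⟩
  rw [Real.coe_toNNReal _ (by positivity), Real.dist_eq]
  unfold tpow
  refine (abs_pow_sub_pow_le _ _ _).trans ?_
  have h2 := h1.dist_le_mul x y
  simp only [NNReal.coe_one, one_mul, Real.dist_eq] at h2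
  have h3 : max |max (-R) (min R x)| |max (-R) (min R y)| ≤ R :=
    max_le (clamp_abs hR x) (clamp_abs hR y)
  rw [mul_comm ((k:ℝ) * _), ← mul_assoc, Real.dist_eq]
  gcongr

/-- Truncated potential. -/
noncomputable def tpot (R : ℝ) (k : ℕ) (x : ℝ) : ℝ := ∫ y in (0:ℝ)..x, tpow R k y

lemma tpot_deriv (R : ℝ) (k : ℕ) (x : ℝ) : HasDerivAt (tpot R k) (tpow R k x) x :=
  intervalIntegral.integral_hasDerivAt_right ((tpow_cont R k).intervalIntegrable _ _)
    (tpow_cont R k).stronglyMeasurable.stronglyMeasurableAtFilter (tpow_cont R k).continuousAt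

lemma tpow_neg {R : ℝ} (hR : 0 ≤ R) {k : ℕ} (hk : Odd k) (x : ℝ) :
    tpow R k (-x) = - tpow R k x := by
  unfold tpow
  rw [← hk.neg_pow]
  congr 1
  grind

lemma tpot_even {R : ℝ} (hR : 0 ≤ R) {k : ℕ} (hk : Odd k) (x : ℝ) :
    tpot R k (-x) = tpot R k x := by
  unfold tpot
  have := intervalIntegral.integral_comp_neg (a := 0) (b := x) (tpow R k)
  simp only [tpow_neg hR hk, intervalIntegral.integral_neg, neg_zero] at this
  rw [intervalIntegral.integral_symm, ← this, neg_neg]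

lemma tpot_abs {R : ℝ} (hR : 0 ≤ R) {k : ℕ} (hk : Odd k) (x : ℝ) :
    tpot R k |x| = tpot R k x := by
  rcases abs_choice x with h | h <;> rw [h]
  exact tpot_even hR hk x

lemma tpot_mono {R : ℝ} (hR : 0 < R) (k : ℕ) : StrictMonoOn (tpot R k) (Ici 0) := by
  apply strictMonoOn_of_deriv_pos (convex_Ici 0)
  · exact fun x _ => (tpot_deriv R k x).continuousAt.continuousWithinAt
  · intro x hx
    rw [interior_Ici] at hx
    rw [(tpot_deriv R k x).deriv]
    exact pow_pos (lt_max_of_lt_right (lt_min hR hx)) k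

lemma tpot_nonneg {R : ℝ} (hR : 0 < R) {k : ℕ} (hk : Odd k) (x : ℝ) : 0 ≤ tpot R k x := by
  rw [← tpot_abs hR.le hk]
  have := (tpot_mono hR k).monotoneOn self_mem_Ici (abs_nonneg x : |x| ∈ Ici 0) (abs_nonneg x)
  simpa [tpot] using this

lemma tpot_eq {R : ℝ} {k : ℕ} {x : ℝ} (h : |x| ≤ R) :
    tpot R k x = x ^ (k+1) / (k+1) := by
  unfold tpot
  rw [intervalIntegral.integral_congr (g := fun y => y ^ k)]
  · simp
  · intro y hy
    apply tpow_eq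
    have := abs_sub_left_of_mem_uIcc hy
    simp at this
    exact this.trans h

lemma tpot_bound {R : ℝ} (hR : 0 < R) {k : ℕ} (hk : Odd k) {x : ℝ}
    (h : tpot R k x ≤ R ^ (k+1) / (k+1)) : |x| ≤ R := by
  rw [← tpot_eq (abs_of_pos hR).le, ← tpot_abs hR.le hk] at h
  exact ((tpot_mono hR k).le_iff_le (abs_nonneg x : |x| ∈ Ici 0) (hR.le : R ∈ Ici 0)).mp h

lemma exists_R (k : ℕ) (x E : ℝ) : ∃ R : ℝ, 0 < R ∧ |x| ≤ R ∧ E ≤ R ^ (k+1) / (k+1) := by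
  have h : Tendsto (fun R : ℝ => R ^ (k+1) / (k+1)) atTop atTop :=
    (tendsto_pow_atTop (by simp)).atTop_div_const (by positivity)
  obtain ⟨R, h1, h2, h3⟩ := ((eventually_gt_atTop (0:ℝ)).and
    ((eventually_ge_atTop |x|).and (h.eventually_ge_atTop E))).exists
  exact ⟨R, h1, h2, h3⟩

theorem dispersionless_global_existence (k : ℕ) (hk_odd : Odd k) (hk_pos : 0 < k)
    (u₀ v₀ : ℝ) :
    ∃ u v : ℝ → ℝ, u 0 = u₀ ∧ v 0 = v₀ ∧
      ∀ t : ℝ, HasDerivAt u (v t) t ∧ HasDerivAt v (-(u t ^ k)) t := by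
  set E : ℝ := v₀ ^ (1+1) / ((1:ℕ)+1) + u₀ ^ (k+1) / (k+1) with hE
  obtain ⟨R, hR, huR, hER⟩ := exists_R k u₀ E
  obtain ⟨S, hS, hvS, hES⟩ := exists_R 1 v₀ E
  obtain ⟨K1, hK1⟩ := tpow_lip hR.le k
  obtain ⟨K2, hK2⟩ := tpow_lip hS.le 1
  have hlip := (hK2.comp (LipschitzWith.prod_snd (α := ℝ) (β := ℝ))).prodMk
    ((hK1.comp (LipschitzWith.prod_fst (α := ℝ) (β := ℝ))).neg)
  obtain ⟨α, h0, hα⟩ := aux_global (fun p : ℝ × ℝ => (tpow S 1 p.2, - tpow R k p.1)) _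
    (max (S ^ 1) (R ^ k)).toNNReal hlip (by
      intro p
      rw [Real.coe_toNNReal _ (by positivity), Prod.norm_def]
      simp only [norm_neg, Real.norm_eq_abs]
      exact max_le_max (tpow_abs hS.le 1 _) (tpow_abs hR.le k _)) (u₀, v₀)
  have hu : ∀ t, HasDerivAt (fun t => (α t).1) (tpow S 1 (α t).2) t := fun t =>
    (hα t).fst
  have hv : ∀ t, HasDerivAt (fun t => (α t).2) (- tpow R k (α t).1) t := fun t =>
    (hα t).snd
  have hH : ∀ t, HasDerivAt (fun t => tpot S 1 (α t).2 + tpot R k (α t).1) 0 t := by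
    intro t
    have := ((tpot_deriv S 1 (α t).2).comp t (hv t)).add ((tpot_deriv R k (α t).1).comp t (hu t))
    exact this.congr_deriv (by ring)
  have hc : ∀ t, tpot S 1 (α t).2 + tpot R k (α t).1 = E := by
    intro t
    have := is_const_of_deriv_eq_zero (fun t => (hH t).differentiableAt)
      (fun t => (hH t).deriv) t 0
    rw [this, h0, tpot_eq hvS, tpot_eq huR]
  have hbu : ∀ t, |(α t).1| ≤ R := fun t =>
    tpot_bound hR hk_odd (by linarith [hc t, tpot_nonneg hS odd_one (α t).2])
  have hbv : ∀ t, |(α t).2| ≤ S := fun t =>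
    tpot_bound hS odd_one (by linarith [hc t, tpot_nonneg hR hk_odd (α t).1])
  refine ⟨fun t => (α t).1, fun t => (α t).2, by simp [h0], by simp [h0], fun t => ⟨?_, ?_⟩⟩
  · have := hu t
    rwa [tpow_eq (hbv t), pow_one] at this
  · have := hv t
    rwa [tpow_eq (hbu t)] at this
end

section
/- Let k be a positive odd integer, let (u₀, v₀) ∈ ℝ² with (u₀, v₀) ≠ (0, 0), and let u, v : ℝ → ℝ be differentiable functions satisfying u' = v, v' = −u^k and (u(0), v(0)) = (u₀, v₀). Set H₀ := v₀²/2 + u₀^{k+1}/(k+1) (which is strictly positive), U := ((k+1) H₀)^{1/(k+1)}, and T := 4 ∫₀^U ( 2 ( H₀ − u^{k+1}/(k+1) ) )^{-1/2} du. Then the solution is periodic with period T: for all t ∈ ℝ, u(t + T) = u(t) and v(t + T) = v(t). -/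
open MeasureTheory

/-- Solutions of the system. -/
def DSol (k : ℕ) (u v : ℝ → ℝ) : Prop :=
  (∀ t : ℝ, HasDerivAt u (v t) t) ∧ (∀ t : ℝ, HasDerivAt v (-(u t ^ k)) t)

theorem DSol.shift {k : ℕ} {u v : ℝ → ℝ} (h : DSol k u v) (s : ℝ) :
    DSol k (fun t => u (t + s)) (fun t => v (t + s)) :=
  ⟨fun t => (h.1 (t + s)).comp_add_const t s, fun t => (h.2 (t + s)).comp_add_const t s⟩

theorem DSol.neg {k : ℕ} (hk : Odd k) {u v : ℝ → ℝ} (h : DSol k u v) :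
    DSol k (fun t => - u t) (fun t => - v t) :=
  ⟨fun t => (h.1 t).neg, fun t => by
    have := (h.2 t).neg
    rw [hk.neg_pow]; exact this⟩

theorem DSol.refl {k : ℕ} {u v : ℝ → ℝ} (h : DSol k u v) (s : ℝ) :
    DSol k (fun t => u (s - t)) (fun t => - v (s - t)) :=
  ⟨fun t => (h.1 (s - t)).comp_const_sub s t, fun t => by
    have := ((h.2 (s - t)).comp_const_sub s t).neg
    rw [neg_neg] at this
    exact this⟩

theorem DSol.energy {k : ℕ} {u v : ℝ → ℝ} (h : DSol k u v) (s t : ℝ) :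
    v s ^ 2 / 2 + u s ^ (k + 1) / ((k : ℝ) + 1) = v t ^ 2 / 2 + u t ^ (k + 1) / ((k : ℝ) + 1) := by
  have hk : (k : ℝ) + 1 ≠ 0 := by positivity
  have hd : ∀ x, HasDerivAt (fun t => v t ^ 2 / 2 + u t ^ (k + 1) / ((k : ℝ) + 1)) 0 x := by
    intro x
    have := (((h.2 x).pow 2).div_const 2).add (((h.1 x).pow (k + 1)).div_const ((k : ℝ) + 1))
    convert! this using 1
    push_cast
    field_simp
    simp
  exact is_const_of_deriv_eq_zero (fun x => (hd x).differentiableAt) (fun x => (hd x).deriv) s t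

theorem DSol.bdd {k : ℕ} (hk : Odd k) {u v : ℝ → ℝ} (h : DSol k u v) :
    ∃ R : ℝ, ∀ t, |u t| ≤ R ∧ |v t| ≤ R := by
  have hk0 : (0 : ℝ) < (k : ℝ) + 1 := by positivity
  set E := v 0 ^ 2 / 2 + u 0 ^ (k + 1) / ((k : ℝ) + 1) with hE
  have hev : Even (k + 1) := hk.add_one
  have hE0 : 0 ≤ E := by
    have := hev.pow_nonneg (u 0)
    positivity
  refine ⟨1 + ((k : ℝ) + 1) * E + 2 * E, fun t => ?_⟩
  have he := h.energy t 0
  rw [← hE] at he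
  have h1 : 0 ≤ u t ^ (k + 1) := hev.pow_nonneg (u t)
  have h2 : 0 ≤ ((k : ℝ) + 1) * E := by positivity
  constructor
  · by_contra! hc
    have h3 : 1 ≤ |u t| := by linarith
    have h4 : |u t| ≤ |u t| ^ (k + 1) := le_self_pow₀ h3 (by omega)
    rw [hev.pow_abs] at h4
    have h5 : u t ^ (k + 1) / ((k : ℝ) + 1) ≤ E := by nlinarith [sq_nonneg (v t)]
    rw [div_le_iff₀ hk0] at h5
    linarith
  · have h5 : 0 ≤ u t ^ (k + 1) / ((k : ℝ) + 1) := by positivity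
    have h6 : |v t| ^ 2 ≤ 2 * E := by rw [sq_abs]; linarith
    nlinarith [sq_nonneg (|v t| - 1)]

theorem DSol.unique {k : ℕ} (hk : Odd k) {u v p q : ℝ → ℝ} (h : DSol k u v) (h' : DSol k p q)
    (s : ℝ) (h1 : u s = p s) (h2 : v s = q s) (t : ℝ) : u t = p t ∧ v t = q t := by
  obtain ⟨R, hR⟩ := h.bdd hk
  obtain ⟨R', hR'⟩ := h'.bdd hk
  let F : ℝ × ℝ → ℝ × ℝ := fun x => (x.2, -(x.1 ^ k))
  have hF : ContDiff ℝ 1 F := by unfold F; fun_prop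
  let S : Set (ℝ × ℝ) := Metric.closedBall 0 (max R R')
  obtain ⟨K, hK⟩ := (hF.contDiffOn (s := S)).exists_lipschitzOnWith (by simp)
    (convex_closedBall _ _) (isCompact_closedBall _ _)
  have := ODE_solution_unique_univ (v := fun _ => F) (s := fun _ => S) (K := K)
    (f := fun t => (u t, v t)) (g := fun t => (p t, q t)) (t₀ := s) (fun _ => hK)
    (fun t => ⟨(h.1 t).prodMk (h.2 t), by
      simp only [S, mem_closedBall_zero_iff, Prod.norm_def, Real.norm_eq_abs]
      exact max_le ((hR t).1.trans (le_max_left _ _)) ((hR t).2.trans (le_max_left _ _))⟩)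
    (fun t => ⟨(h'.1 t).prodMk (h'.2 t), by
      simp only [S, mem_closedBall_zero_iff, Prod.norm_def, Real.norm_eq_abs]
      exact max_le ((hR' t).1.trans (le_max_right _ _)) ((hR' t).2.trans (le_max_right _ _))⟩)
    (by simp [h1, h2])
  simpa using congrFun this t

theorem mv_le {f f' : ℝ → ℝ} (h : ∀ t, HasDerivAt f (f' t) t) {a b C : ℝ} (hab : a ≤ b)
    (hC : ∀ t, a < t → t < b → f' t ≤ C) : f b - f a ≤ C * (b - a) := by
  rcases hab.eq_or_lt with rfl | hab
  · simp
  obtain ⟨c, hc, he⟩ := exists_hasDerivAt_eq_slope f f' hab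
    (fun x _ => (h x).continuousAt.continuousWithinAt) (fun x _ => h x)
  have := hC c hc.1 hc.2
  rw [he, div_le_iff₀ (by linarith)] at this
  exact this

theorem mv_ge {f f' : ℝ → ℝ} (h : ∀ t, HasDerivAt f (f' t) t) {a b C : ℝ} (hab : a ≤ b)
    (hC : ∀ t, a < t → t < b → C ≤ f' t) : C * (b - a) ≤ f b - f a := by
  rcases hab.eq_or_lt with rfl | hab
  · simp
  obtain ⟨c, hc, he⟩ := exists_hasDerivAt_eq_slope f f' hab
    (fun x _ => (h x).continuousAt.continuousWithinAt) (fun x _ => h x)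
  have := hC c hc.1 hc.2
  rw [he, le_div_iff₀ (by linarith)] at this
  exact this

theorem DSol.not_pos {k : ℕ} {u v : ℝ → ℝ} (h : DSol k u v) (a : ℝ)
    (hpos : ∀ t, a ≤ t → 0 < u t) : False := by
  have hanti : ∀ s t, a ≤ s → s ≤ t → v t ≤ v s := by
    intro s t has hst
    have := mv_le h.2 (C := 0) hst (fun x hx _ => by
      have := pow_pos (hpos x (by linarith)) k
      linarith)
    linarith
  have hv0 : ∀ s, a ≤ s → 0 ≤ v s := by
    intro s hs
    by_contra! hneg
    have hu := hpos s hs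
    have hd : 0 < u s / (- v s) := div_pos hu (by linarith)
    have h1 := mv_le h.1 (a := s) (b := s + u s / (- v s)) (C := v s) (by linarith)
      (fun x hx _ => hanti s x hs hx.le)
    have h2 := hpos (s + u s / (- v s)) (by linarith)
    have h3 : v s * (s + u s / (- v s) - s) = - u s := by
      have : v s ≠ 0 := hneg.ne
      field_simp
      ring
    linarith
  have hua : ∀ s, a ≤ s → u a ≤ u s := by
    intro s hs
    have := mv_ge h.1 (C := 0) hs (fun x hx _ => hv0 x hx.le)
    linarith
  have hp : 0 < u a ^ k := pow_pos (hpos a le_rfl) k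
  have hb : a ≤ a + (v a + 1) / u a ^ k := by
    have := hv0 a le_rfl
    have : 0 ≤ (v a + 1) / u a ^ k := by positivity
    linarith
  have h1 := mv_le h.2 (a := a) (b := a + (v a + 1) / u a ^ k) (C := - u a ^ k) hb
    (fun x hx _ => by
      have := pow_le_pow_left₀ (hpos a le_rfl).le (hua x hx.le) k
      linarith)
  have h2 : - u a ^ k * (a + (v a + 1) / u a ^ k - a) = - (v a + 1) := by
    field_simp
    ring
  have := hv0 _ hb
  linarith

theorem DSol.exists_zero {k : ℕ} (hk : Odd k) {u v : ℝ → ℝ} (h : DSol k u v) :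
    ∃ t, u t = 0 := by
  have hc : Continuous u := continuous_iff_continuousAt.2 fun x => (h.1 x).continuousAt
  by_contra! hne
  by_cases hp : ∀ t, 0 ≤ t → 0 < u t
  · exact h.not_pos 0 hp
  by_cases hq : ∀ t, 0 ≤ t → 0 < - u t
  · exact (h.neg hk).not_pos 0 hq
  push Not at hp hq
  obtain ⟨a, _, ha⟩ := hp
  obtain ⟨b, _, hb⟩ := hq
  obtain ⟨c, hc⟩ := mem_range_of_exists_le_of_exists_ge hc ⟨a, ha⟩ ⟨b, by linarith⟩
  exact hne c hc

theorem DSol.quarter {k : ℕ} (hk : Odd k) {u v : ℝ → ℝ} (h : DSol k u v) (t₀ : ℝ)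
    (hu0 : u t₀ = 0) (hv0 : 0 < v t₀) (H : ℝ)
    (hH : ∀ t, v t ^ 2 / 2 + u t ^ (k + 1) / ((k : ℝ) + 1) = H) :
    v (t₀ + ∫ x in (0 : ℝ)..((((k : ℝ) + 1) * H) ^ ((1 : ℝ) / ((k : ℝ) + 1))),
        (2 * (H - x ^ (k + 1) / ((k : ℝ) + 1))) ^ (-(1 / 2) : ℝ)) = 0 := by
  have hcu : Continuous u := continuous_iff_continuousAt.2 fun x => (h.1 x).continuousAt
  have hcv : Continuous v := continuous_iff_continuousAt.2 fun x => (h.2 x).continuousAt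
  have hk0 : (0 : ℝ) < (k : ℝ) + 1 := by positivity
  -- a zero of `v` after `t₀`
  have hz : ∃ t, t₀ ≤ t ∧ v t = 0 := by
    by_contra! hne
    have hvp : ∀ t, t₀ ≤ t → 0 < v t := by
      intro t ht
      by_contra! hle
      obtain ⟨c, hc, hc0⟩ := intermediate_value_Icc' ht hcv.continuousOn (⟨hle, hv0.le⟩ : (0:ℝ) ∈ Set.Icc (v t) (v t₀))
      exact hne c hc.1 hc0
    have hmono : StrictMonoOn u (Set.Ici t₀) := by
      apply strictMonoOn_of_deriv_pos (convex_Ici _) hcu.continuousOn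
      intro x hx
      rw [interior_Ici] at hx
      rw [(h.1 x).deriv]
      exact hvp x (le_of_lt hx)
    refine h.not_pos (t₀ + 1) fun t ht => ?_
    rw [← hu0]
    exact hmono (Set.mem_Ici.2 le_rfl) (Set.mem_Ici.2 (by linarith)) (by linarith)
  -- first one
  have hclosed : IsClosed {t | t₀ ≤ t ∧ v t = 0} :=
    (isClosed_le continuous_const continuous_id).inter (isClosed_eq hcv continuous_const)
  have hbdd : BddBelow {t | t₀ ≤ t ∧ v t = 0} := ⟨t₀, fun t ht => ht.1⟩
  obtain ⟨h2a, h2b⟩ := hclosed.csInf_mem hz hbdd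
  have hmin : ∀ t, t₀ ≤ t → t < sInf {t | t₀ ≤ t ∧ v t = 0} → v t ≠ 0 := by
    intro t ht hlt h0
    exact absurd (csInf_le hbdd ⟨ht, h0⟩) (not_le.2 hlt)
  generalize sInf {t | t₀ ≤ t ∧ v t = 0} = t₂ at h2a h2b hmin
  have hlt : t₀ < t₂ := by
    rcases h2a.eq_or_lt with rfl | h'
    · linarith
    · exact h'
  have hvp : ∀ t, t₀ ≤ t → t < t₂ → 0 < v t := by
    intro t ht ht2
    by_contra! hle
    obtain ⟨c, hc, hc0⟩ := intermediate_value_Icc' ht hcv.continuousOn (⟨hle, hv0.le⟩ : (0:ℝ) ∈ Set.Icc (v t) (v t₀))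
    exact hmin c hc.1 (hc.2.trans_lt ht2) hc0
  have hmono : StrictMonoOn u (Set.Icc t₀ t₂) := by
    apply strictMonoOn_of_deriv_pos (convex_Icc _ _) hcu.continuousOn
    intro x hx
    rw [interior_Icc] at hx
    rw [(h.1 x).deriv]
    exact hvp x hx.1.le hx.2
  have hu2 : 0 < u t₂ := by
    rw [← hu0]
    exact hmono (Set.left_mem_Icc.2 h2a) (Set.right_mem_Icc.2 h2a) hlt
  have hU : (((k : ℝ) + 1) * H) ^ ((1 : ℝ) / ((k : ℝ) + 1)) = u t₂ := by
    have : ((k : ℝ) + 1) * H = u t₂ ^ (k + 1) := by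
      rw [← hH t₂, h2b]; field_simp; ring
    rw [this, one_div]
    have := Real.pow_rpow_inv_natCast hu2.le (n := k + 1) (by omega)
    push_cast at this
    exact this
  have himg := ContinuousOn.image_Ioo_of_strictMonoOn h2a hcu.continuousOn hmono
  have hI : (∫ x in (0 : ℝ)..(u t₂),
        (2 * (H - x ^ (k + 1) / ((k : ℝ) + 1))) ^ (-(1 / 2) : ℝ)) = t₂ - t₀ := by
    rw [intervalIntegral.integral_of_le hu2.le, integral_Ioc_eq_integral_Ioo]
    rw [hu0] at himg
    rw [← himg, integral_image_eq_integral_abs_deriv_smul measurableSet_Ioo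
      (fun x _ => (h.1 x).hasDerivWithinAt) (hmono.injOn.mono Set.Ioo_subset_Icc_self)]
    have : ∀ x ∈ Set.Ioo t₀ t₂, |v x| • (2 * (H - u x ^ (k + 1) / ((k : ℝ) + 1))) ^ (-(1 / 2) : ℝ)
        = 1 := by
      intro x hx
      have hv := hvp x hx.1.le hx.2
      have he : 2 * (H - u x ^ (k + 1) / ((k : ℝ) + 1)) = v x ^ 2 := by
        rw [← hH x]; ring
      rw [he, abs_of_pos hv, Real.rpow_neg (by positivity), ← Real.sqrt_eq_rpow,
        Real.sqrt_sq hv.le, smul_eq_mul, mul_inv_cancel₀ hv.ne']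
    rw [setIntegral_congr_fun measurableSet_Ioo this]
    simp [h2a]
  rw [hU, hI]
  simpa using h2b

theorem DSol.half {k : ℕ} (hk : Odd k) {u v : ℝ → ℝ} (h : DSol k u v) (t₀ τ : ℝ)
    (hu0 : u t₀ = 0) (hv : v (t₀ + τ) = 0) (t : ℝ) :
    u (t + 2 * τ) = - u t ∧ v (t + 2 * τ) = - v t := by
  have hr := h.unique hk (h.refl (2 * (t₀ + τ))) (t₀ + τ)
    (by congr 1; ring) (by
      have : 2 * (t₀ + τ) - (t₀ + τ) = t₀ + τ := by ring
      simp [this, hv]) t₀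
  have he : 2 * (t₀ + τ) - t₀ = t₀ + 2 * τ := by ring
  simp only [he] at hr
  exact (h.shift (2 * τ)).unique hk (h.neg hk) t₀ (by linarith)
    (by linarith) t

theorem dispersionless_periodicity (k : ℕ) (hk_odd : Odd k) (hk_pos : 0 < k)
    (u₀ v₀ : ℝ) (hne : (u₀, v₀) ≠ (0, 0)) (u v : ℝ → ℝ)
    (hu0 : u 0 = u₀) (hv0 : v 0 = v₀)
    (hu : ∀ t : ℝ, HasDerivAt u (v t) t)
    (hv : ∀ t : ℝ, HasDerivAt v (-(u t ^ k)) t) :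
    let H₀ : ℝ := v₀ ^ 2 / 2 + u₀ ^ (k + 1) / ((k : ℝ) + 1)
    let U : ℝ := (((k : ℝ) + 1) * H₀) ^ ((1 : ℝ) / ((k : ℝ) + 1))
    let T : ℝ := 4 * ∫ x in (0 : ℝ)..U,
        (2 * (H₀ - x ^ (k + 1) / ((k : ℝ) + 1))) ^ (-(1 / 2) : ℝ)
    0 < H₀ ∧ ∀ t : ℝ, u (t + T) = u t ∧ v (t + T) = v t := by
  intro H₀ U T
  have h : DSol k u v := ⟨hu, hv⟩
  have hev : Even (k + 1) := hk_odd.add_one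
  have hH : 0 < H₀ := by
    have h1 : 0 ≤ u₀ ^ (k + 1) := hev.pow_nonneg u₀
    by_cases hz : u₀ = 0
    · have hv' : v₀ ≠ 0 := fun h => hne (by rw [hz, h])
      have : 0 < v₀ ^ 2 := by positivity
      positivity
    · have : 0 < u₀ ^ (k + 1) := hev.pow_pos hz
      positivity
  refine ⟨hH, ?_⟩
  have hE : ∀ t, v t ^ 2 / 2 + u t ^ (k + 1) / ((k : ℝ) + 1) = H₀ := by
    intro t
    rw [h.energy t 0, hu0, hv0]
  obtain ⟨t₀, ht₀⟩ := h.exists_zero hk_odd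
  have hvt : v t₀ ≠ 0 := by
    intro hv'
    have := hE t₀
    rw [ht₀, hv'] at this
    simp at this
    linarith
  set τ := ∫ x in (0 : ℝ)..U, (2 * (H₀ - x ^ (k + 1) / ((k : ℝ) + 1))) ^ (-(1 / 2) : ℝ) with hτ
  have hq : v (t₀ + τ) = 0 := by
    rcases lt_or_gt_of_ne hvt with hlt | hgt
    · have := (h.neg hk_odd).quarter hk_odd t₀ (by simp [ht₀]) (by simpa using hlt) H₀
        (fun t => by rw [neg_sq, hev.neg_pow]; exact hE t)
      exact neg_eq_zero.1 this
    · exact h.quarter hk_odd t₀ ht₀ hgt H₀ hE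
  intro t
  have a := h.half hk_odd t₀ τ ht₀ hq t
  have b := h.half hk_odd t₀ τ ht₀ hq (t + 2 * τ)
  have hT : t + T = t + 2 * τ + 2 * τ := by simp only [T]; ring
  rw [hT, b.1, b.2, a.1, a.2]
  simp
end
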